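/- Let p ∈ {47, 59, 67, 71, 73, 79, 83} and let α > 0 be a real number. Then: (1) if α² is irrational, then E^n ↛ (ℓ_3, αℓ_{p²}); (2) if α² = a/b is rational in lowest terms with integers a, b > 0, and either p does not divide b or a > 4p/3, then E^n ↛ (ℓ_3, αℓ_{p²}). -/

import Mathlib

/-!
The coloring is a quadratic one. For a real `lam`, a point `x` is red when `lam * ‖x‖ ^ 2` lies in
`[0, 9)` modulo `p`. Along an arithmetic progression `x + k • v` the quantity `lam * ‖x + k • v‖ ^ 2`
is a quadratic polynomial in `k` with leading coefficient `lam * ‖v‖ ^ 2`.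

* Red: for a unit vector `v` the second difference of three consecutive values is `2 * lam`. If the
  three values lie in `[0, 9)` modulo `p`, the second difference lies in `(-18, 18)` modulo `p`. This
  is impossible as soon as `lam` is in `[9, 10]` modulo `p`, because `p ≥ 38`.
* Blue: `lam` is taken such that `lam * α ^ 2 = t` is an integer prime to `p`, so that for `‖v‖ = α`
  the values are `t * k ^ 2 + B * k + C`. By Dirichlet's theorem some `d < p` has `d * B` within
  `1 / p` of an integer `m`. Restricting to `k = d * j` with `j < p`, the values are
  `t * d ^ 2 * j ^ 2 + m * j + C` up to an error of constant sign and size less than `1`. Modulo `p`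
  the integer part `t * d ^ 2 * j ^ 2 + m * j` runs over a translate of `{a * u ^ 2}`, `a ≠ 0`
  (`exists_quadratic_eq`). For each of the seven primes every 8 consecutive residues contain both a
  square and a nonsquare or zero (`HasShortGaps`), so such a translate meets every block of 8
  consecutive residues, and some value falls into `[0, 9)` modulo `p` (`exists_quadratic_mem`).

It remains to find `t` prime to `p` with `t / α ^ 2` in `[9, 10]` modulo `p`. For irrational `α ^ 2`
this is density of `ℤ + ℤ * α⁻²`; for `α ^ 2 = a / b` it is a congruence for `t`
(`exists_int_of_not_dvd` when `p ∤ b`, `exists_int_of_dvd` when `p ∣ b`).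
-/

/-! ### Gaps between quadratic residues -/

/-- Among any 8 consecutive residues modulo `p` there is a square, and there is an element that is
zero or a nonsquare. -/
def HasShortGaps (p : ℕ) : Prop :=
  (∀ e : ZMod p, ∃ i : Fin 8, IsSquare (e + ((i : ℕ) : ZMod p))) ∧
  (∀ e : ZMod p, ∃ i : Fin 8, e + ((i : ℕ) : ZMod p) = 0 ∨ ¬ IsSquare (e + ((i : ℕ) : ZMod p)))

theorem hasShortGaps_of_mem {p : ℕ} (hp : p ∈ ({47, 59, 67, 71, 73, 79, 83} : Finset ℕ)) :
    HasShortGaps p := by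
  simp only [Finset.mem_insert, Finset.mem_singleton] at hp
  unfold HasShortGaps
  rcases hp with rfl | rfl | rfl | rfl | rfl | rfl | rfl <;> constructor <;> decide +kernel

/-- A nonzero multiple of the squares meets every block of 8 consecutive residues. -/
theorem HasShortGaps.exists_mul_sq {p : ℕ} [Fact p.Prime] (h : HasShortGaps p)
    {a : ZMod p} (ha : a ≠ 0) (e : ZMod p) :
    ∃ i : ℕ, i < 8 ∧ ∃ u : ZMod p, a * u ^ 2 = e + (i : ZMod p) := by
  -- It suffices that `a * (e + i)` is a square, since `a * u ^ 2 = s` iff `(a * u) ^ 2 = a * s`.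
  suffices hs : ∃ i : Fin 8, IsSquare (a * (e + ((i : ℕ) : ZMod p))) by
    obtain ⟨i, r, hr⟩ := hs
    refine ⟨i, i.2, r / a, ?_⟩
    field_simp
    rw [pow_two, ← hr]
  by_cases hsq : IsSquare a
  · obtain ⟨i, hi⟩ := h.1 e
    exact ⟨i, hsq.mul hi⟩
  · obtain ⟨i, hi | hi⟩ := h.2 e
    · exact ⟨i, by rw [hi, mul_zero]; exact IsSquare.zero⟩
    · refine ⟨i, ?_⟩
      have hs : e + ((i : ℕ) : ZMod p) ≠ 0 := by
        intro h0
        exact hi (by rw [h0]; exact IsSquare.zero)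
      have h2 : ringChar (ZMod p) ≠ 2 := by
        intro h2
        exact hsq (FiniteField.isSquare_of_char_two h2 a)
      rw [← quadraticChar_one_iff_isSquare (mul_ne_zero ha hs), map_mul,
        (quadraticChar_neg_one_iff_not_isSquare).2 hsq,
        (quadraticChar_neg_one_iff_not_isSquare).2 hi]
      norm_num

/-! ### Values of quadratic polynomials modulo `p` -/

/-- The values of `q * j ^ 2 + m * j` for `0 ≤ j < p` meet every block of 8 consecutive residues
modulo `p`, by completing the square. -/
theorem exists_quadratic_eq {p : ℕ} [Fact p.Prime] (hp2 : p ≠ 2) (h : HasShortGaps p)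
    {q : ℤ} (hq : ¬ (p : ℤ) ∣ q) (m c : ℤ) :
    ∃ j : ℕ, j < p ∧ ∃ i : ℕ, i < 8 ∧ ∃ M : ℤ, q * j ^ 2 + m * j = c + i + p * M := by
  have ha : (q : ZMod p) ≠ 0 := by
    rwa [Ne, ZMod.intCast_zmod_eq_zero_iff_dvd]
  have h2 : (2 : ZMod p) ≠ 0 := by
    have : ringChar (ZMod p) ≠ 2 := by rwa [ZMod.ringChar_zmod_n]
    exact Ring.two_ne_zero this
  -- `q * (j + g) ^ 2 = q * j ^ 2 + m * j + q * g ^ 2`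
  set g : ZMod p := m / (2 * q) with hg
  obtain ⟨i, hi, u, hu⟩ := h.exists_mul_sq ha (c + q * g ^ 2)
  refine ⟨(u - g).val, ZMod.val_lt _, i, hi, ?_⟩
  have hz : ((q * ((u - g).val : ℤ) ^ 2 + m * ((u - g).val : ℤ) - (c + i) : ℤ) : ZMod p) = 0 := by
    push_cast
    rw [ZMod.natCast_zmod_val]
    have hm : (m : ZMod p) = 2 * q * g := by rw [hg]; field_simp
    rw [hm]
    linear_combination hu
  rw [ZMod.intCast_zmod_eq_zero_iff_dvd] at hz
  obtain ⟨M, hM⟩ := hz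
  exact ⟨M, by linarith⟩

/-- Every real quadratic polynomial whose leading coefficient is an integer prime to `p` takes a
value in `[0, 9)` modulo `p` at some `k < p ^ 2`. -/
theorem exists_quadratic_mem {p : ℕ} [Fact p.Prime] (hp2 : p ≠ 2) (h : HasShortGaps p)
    {t : ℤ} (ht : ¬ (p : ℤ) ∣ t) (B C : ℝ) :
    ∃ k : ℕ, k < p ^ 2 ∧ ∃ M : ℤ,
      (p : ℝ) * M ≤ t * (k : ℝ) ^ 2 + B * k + C ∧ t * (k : ℝ) ^ 2 + B * k + C < p * M + 9 := by
  have hpp : p.Prime := Fact.out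
  have hp0 : (0 : ℝ) < p := by exact_mod_cast hpp.pos
  have hpI : Prime (p : ℤ) := Nat.prime_iff_prime_int.mp hpp
  obtain ⟨d, hd0, hdle, hd⟩ := Real.exists_nat_abs_mul_sub_round_le B
    (n := p - 1) (by have := hpp.two_le; omega)
  set m : ℤ := round ((d : ℝ) * B) with hm
  set δ : ℝ := (d : ℝ) * B - m with hδ
  have hδp : |δ| * p ≤ 1 := by
    have h1 : ((p - 1 : ℕ) : ℝ) + 1 = p := by
      have := hpp.pos
      rw [← Nat.cast_succ]; congr 1; omega
    rw [h1] at hd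
    rwa [le_div_iff₀ hp0] at hd
  have hq : ¬ (p : ℤ) ∣ t * (d : ℤ) ^ 2 := by
    intro hdvd
    rcases hpI.dvd_or_dvd hdvd with h1 | h1
    · exact ht h1
    · have h2 := Int.natCast_dvd_natCast.mp (hpI.dvd_of_dvd_pow h1)
      have := Nat.le_of_dvd hd0 h2
      have := hpp.two_le
      omega
  -- `C'` absorbs the sign of the error: `C + δ * j` lies in `[C', C' + 1]` for all `0 ≤ j < p`.
  obtain ⟨C', hC'⟩ : ∃ C' : ℝ, ∀ j : ℕ, j < p → C' ≤ C + δ * j ∧ C + δ * j ≤ C' + 1 := by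
    have hb : ∀ j : ℕ, j < p → |δ| * j ≤ 1 := fun j hj =>
      (mul_le_mul_of_nonneg_left (by exact_mod_cast hj.le) (abs_nonneg δ)).trans hδp
    rcases le_total 0 δ with h0 | h0
    · refine ⟨C, fun j hj => ?_⟩
      have := hb j hj
      rw [abs_of_nonneg h0] at this
      have : 0 ≤ δ * j := by positivity
      constructor <;> linarith
    · refine ⟨C - 1, fun j hj => ?_⟩
      have := hb j hj
      rw [abs_of_nonpos h0] at this
      have : 0 ≤ -δ * j := mul_nonneg (by linarith) (by positivity)
      constructor <;> linarith
  obtain ⟨j, hj, i, hi, M, hM⟩ := exists_quadratic_eq hp2 h hq m ⌈-C'⌉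
  refine ⟨d * j, ?_, M, ?_⟩
  · have := hpp.two_le
    have hdp : d < p := by omega
    rw [pow_two]
    exact Nat.mul_lt_mul'' hdp hj
  · have hMR : (t : ℝ) * (d : ℝ) ^ 2 * j ^ 2 + m * j = (⌈-C'⌉ : ℝ) + i + p * M := by
      exact_mod_cast hM
    have hval : (t : ℝ) * ((d * j : ℕ) : ℝ) ^ 2 + B * ((d * j : ℕ) : ℝ) + C =
        (⌈-C'⌉ : ℝ) + i + p * M + (C + δ * j) := by
      rw [← hMR, hδ]; push_cast; ring
    rw [hval]
    have h1 := Int.le_ceil (-C')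
    have h2 := Int.ceil_lt_add_one (-C')
    have h3 : (i : ℝ) ≤ 7 := by exact_mod_cast Nat.lt_succ_iff.mp hi
    have h4 : (0 : ℝ) ≤ i := by positivity
    obtain ⟨h5, h6⟩ := hC' j hj
    constructor <;> linarith

/-! ### The coloring -/

/-- The quadratic coloring, given a suitable scaling factor `t / α ^ 2`. -/
theorem exists_coloring {p : ℕ} [Fact p.Prime] (hp : 38 ≤ p) (h : HasShortGaps p)
    {α : ℝ} (hα : 0 < α) (n : ℕ)
    (ht : ∃ t N : ℤ, ¬ (p : ℤ) ∣ t ∧ 9 ≤ t / α ^ 2 - p * N ∧ t / α ^ 2 - p * N ≤ 10) :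
    ∃ red : EuclideanSpace ℝ (Fin n) → Prop,
      (¬ ∃ (x v : EuclideanSpace ℝ (Fin n)), ‖v‖ = 1 ∧
        ∀ k : ℕ, k < 3 → red (x + (k : ℝ) • v)) ∧
      (¬ ∃ (x v : EuclideanSpace ℝ (Fin n)), ‖v‖ = α ∧
        ∀ k : ℕ, k < p ^ 2 → ¬ red (x + (k : ℝ) • v)) := by
  obtain ⟨t, N, hpt, hN1, hN2⟩ := ht
  set lam : ℝ := t / α ^ 2 with hlam
  have hp38 : (38 : ℝ) ≤ p := by exact_mod_cast hp
  have hexp : ∀ (x v : EuclideanSpace ℝ (Fin n)) (k : ℕ),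
      ‖x + (k : ℝ) • v‖ ^ 2 = ‖x‖ ^ 2 + 2 * k * inner ℝ x v + (k : ℝ) ^ 2 * ‖v‖ ^ 2 := by
    intro x v k
    rw [norm_add_sq_real, inner_smul_right, norm_smul, mul_pow, Real.norm_eq_abs, sq_abs]
    ring
  refine ⟨fun x => ∃ M : ℤ, (p : ℝ) * M ≤ lam * ‖x‖ ^ 2 ∧ lam * ‖x‖ ^ 2 < p * M + 9, ?_, ?_⟩
  · rintro ⟨x, v, hv, hred⟩
    obtain ⟨M0, h0, h0'⟩ := hred 0 (by norm_num)
    obtain ⟨M1, h1, h1'⟩ := hred 1 (by norm_num)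
    obtain ⟨M2, h2, h2'⟩ := hred 2 (by norm_num)
    rw [hexp, hv] at h0 h0' h1 h1' h2 h2'
    push_cast at h0 h0' h1 h1' h2 h2'
    -- `p * (M0 - 2 * M1 + M2 - 2 * N)` would lie strictly between `0` and `p`.
    have hlo : (0 : ℝ) < p * ((M0 - 2 * M1 + M2 - 2 * N : ℤ) : ℝ) := by
      push_cast; nlinarith
    have hhi : (p : ℝ) * ((M0 - 2 * M1 + M2 - 2 * N : ℤ) : ℝ) < p * ((1 : ℤ) : ℝ) := by
      push_cast; nlinarith
    have hp0 : (0 : ℝ) < p := by linarith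
    have hlo' := (mul_pos_iff_of_pos_left hp0).mp hlo
    have hhi' := lt_of_mul_lt_mul_left hhi hp0.le
    rw [Int.cast_pos] at hlo'
    rw [Int.cast_lt] at hhi'
    omega
  · rintro ⟨x, v, hv, hblue⟩
    obtain ⟨k, hk, M, h1, h2⟩ := exists_quadratic_mem (by omega) h hpt
      (lam * (2 * inner ℝ x v)) (lam * ‖x‖ ^ 2)
    have hval : lam * ‖x + (k : ℝ) • v‖ ^ 2 =
        t * (k : ℝ) ^ 2 + lam * (2 * inner ℝ x v) * k + lam * ‖x‖ ^ 2 := by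
      have hta : lam * α ^ 2 = t := by rw [hlam]; field_simp
      rw [hexp, hv, ← hta]; ring
    refine hblue k hk ⟨M, ?_, ?_⟩
    · rw [hval]; exact h1
    · rw [hval]; exact h2

/-! ### Choice of the scaling factor -/

theorem exists_int_of_irrational {p : ℕ} (hp : p.Prime) {s : ℝ} (hs : Irrational s) :
    ∃ t N : ℤ, ¬ (p : ℤ) ∣ t ∧ 9 ≤ t / s - p * N ∧ t / s - p * N ≤ 10 := by
  have hp0 : (0 : ℝ) < p := by exact_mod_cast hp.pos
  have hirr : Irrational (s⁻¹ / 1) := by rw [div_one]; exact hs.inv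
  have hdense := dense_addSubgroupClosure_pair_iff.2 hirr
  obtain ⟨y, hy, hy1, hy2⟩ := hdense.exists_between
    (show (9 - s⁻¹) / p < (10 - s⁻¹) / p by gcongr; norm_num)
  obtain ⟨m, N, rfl⟩ := AddSubgroup.mem_closure_pair.mp hy
  rw [div_lt_iff₀ hp0] at hy1
  rw [lt_div_iff₀ hp0] at hy2
  simp only [zsmul_eq_mul, mul_one] at hy1 hy2
  refine ⟨1 + p * m, -N, ?_, ?_, ?_⟩
  · intro hdvd
    have h1 : (p : ℤ) ∣ 1 := (Int.dvd_add_left (dvd_mul_right _ _)).mp hdvd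
    exact (Nat.prime_iff_prime_int.mp hp).not_dvd_one h1
  · push_cast
    rw [div_eq_mul_inv]
    nlinarith
  · push_cast
    rw [div_eq_mul_inv]
    nlinarith

/-- If `b` is prime to `a` then `t * b` can be made any residue `j` modulo `a`. -/
theorem exists_mul_eq_add_mul {a b : ℤ} (h : IsCoprime b a) (j : ℤ) :
    ∃ t N : ℤ, t * b = j + a * N := by
  obtain ⟨u, v, huv⟩ := h
  exact ⟨j * u, -(j * v), by linear_combination j * huv⟩

/-- Here `t * b / a` takes modulo `p` all values `j / a`; one takes `j = 9 * a`, or `j = 9 * a + 1`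
when `p ∣ a`, so that `j` and hence `t` is prime to `p`. -/
theorem exists_int_of_not_dvd {p : ℕ} (hp : p.Prime) (hp38 : 38 ≤ p) {a b : ℕ} (ha : 0 < a)
    (hb : 0 < b) (hab : Nat.Coprime a b) (hpb : ¬ p ∣ b) :
    ∃ t N : ℤ, ¬ (p : ℤ) ∣ t ∧ 9 ≤ t / ((a : ℝ) / b) - p * N ∧ t / ((a : ℝ) / b) - p * N ≤ 10 := by
  have hpI : Prime (p : ℤ) := Nat.prime_iff_prime_int.mp hp
  have haR : (0 : ℝ) < a := by exact_mod_cast ha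
  have hbR : (0 : ℝ) < b := by exact_mod_cast hb
  obtain ⟨j, hj, hj1, hj2⟩ : ∃ j : ℤ, ¬ (p : ℤ) ∣ j ∧ 9 * (a : ℤ) ≤ j ∧ j ≤ 10 * (a : ℤ) := by
    by_cases hpa : (p : ℤ) ∣ a
    · refine ⟨9 * a + 1, ?_, by omega, by omega⟩
      intro hdvd
      exact hpI.not_dvd_one ((Int.dvd_add_right (hpa.mul_left 9)).mp hdvd)
    · refine ⟨9 * a, ?_, le_rfl, by omega⟩
      intro hdvd
      rcases hpI.dvd_or_dvd hdvd with h9 | h9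
      · have := Int.le_of_dvd (by norm_num) h9
        omega
      · exact hpa h9
  have hcop : IsCoprime (b : ℤ) ((a * p : ℕ) : ℤ) :=
    Nat.isCoprime_iff_coprime.mpr
      (Nat.Coprime.mul_right hab.symm ((Nat.Prime.coprime_iff_not_dvd hp).mpr hpb).symm)
  obtain ⟨t, N, htN⟩ := exists_mul_eq_add_mul hcop j
  have heq : (t : ℝ) / ((a : ℝ) / b) - p * N = j / a := by
    have : (t : ℝ) * b = j + (a * p) * N := by exact_mod_cast htN
    field_simp
    linear_combination this
  refine ⟨t, N, ?_, ?_, ?_⟩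
  · intro hdvd
    apply hj
    have hjeq : j = t * b - p * (a * N) := by rw [htN]; push_cast; ring
    rw [hjeq]
    exact dvd_sub (hdvd.mul_right _) (dvd_mul_right _ _)
  · rw [heq, le_div_iff₀ haR]
    exact_mod_cast hj1
  · rw [heq, div_le_iff₀ haR]
    exact_mod_cast hj2

/-- Here `t * b / a` takes modulo `p` exactly the values `p * j / a`, whose spacing `p / a` is less
than the length of `[9, 10]`. The residue of `t` modulo `a` is prescribed; as `p ∤ a`, one of `t` and
`t + a` is prime to `p`. -/
theorem exists_int_of_dvd {p : ℕ} (hp : p.Prime) {a b : ℕ}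
    (hb : 0 < b) (hab : Nat.Coprime a b) (hpb : p ∣ b) (hpa : p ≤ a) :
    ∃ t N : ℤ, ¬ (p : ℤ) ∣ t ∧ 9 ≤ t / ((a : ℝ) / b) - p * N ∧ t / ((a : ℝ) / b) - p * N ≤ 10 := by
  have hp0 : (0 : ℝ) < p := by exact_mod_cast hp.pos
  have hpaR : (p : ℝ) ≤ a := by exact_mod_cast hpa
  have haR : (0 : ℝ) < a := by linarith
  have hpna : ¬ (p : ℤ) ∣ a := by
    intro hdvd
    exact hp.one_lt.ne' (Nat.dvd_one.mp (hab ▸ Nat.dvd_gcd (Int.natCast_dvd_natCast.mp hdvd) hpb))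
  obtain ⟨b', rfl⟩ := hpb
  have hb'R : (0 : ℝ) < b' := by exact_mod_cast Nat.pos_of_mul_pos_left hb
  set j : ℤ := ⌈9 * (a : ℝ) / p⌉ with hj
  have hj1 : 9 * (a : ℝ) ≤ j * p := by
    rw [← div_le_iff₀ hp0]; exact Int.le_ceil _
  have hj2 : j * p ≤ 10 * (a : ℝ) := by
    have h1 : (j : ℝ) < 9 * (a : ℝ) / p + 1 := Int.ceil_lt_add_one _
    have h2 : (9 * (a : ℝ) / p + 1) * p = 9 * a + p := by field_simp
    nlinarith
  obtain ⟨t, N, htN, hpt⟩ : ∃ t N : ℤ, t * b' = j + a * N ∧ ¬ (p : ℤ) ∣ t := by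
    obtain ⟨t, N, htN⟩ := exists_mul_eq_add_mul
      (Nat.isCoprime_iff_coprime.mpr (Nat.Coprime.coprime_mul_left_right hab).symm) j
    by_cases hpt : (p : ℤ) ∣ t
    · refine ⟨t + a, N + b', by linear_combination htN, ?_⟩
      intro hdvd
      exact hpna ((Int.dvd_add_right hpt).mp hdvd)
    · exact ⟨t, N, htN, hpt⟩
  have heq : (t : ℝ) / ((a : ℝ) / ((p * b' : ℕ) : ℝ)) - p * N = j * p / a := by
    have : (t : ℝ) * b' = j + a * N := by exact_mod_cast htN
    push_cast
    field_simp
    linear_combination this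
  refine ⟨t, N, hpt, ?_, ?_⟩
  · rw [heq, le_div_iff₀ haR]; exact hj1
  · rw [heq, div_le_iff₀ haR]; exact hj2

/-- Proposition: let p ∈ {47, 59, 67, 71, 73, 79, 83} and α > 0. Then
(1) if α² is irrational, then E^n ↛ (ℓ_3, αℓ_{p²}); and
(2) if α² = a/b is rational in lowest terms with a, b > 0 and either p ∤ b or
a > 4p/3, then E^n ↛ (ℓ_3, αℓ_{p²}). -/
theorem rational_proposition (p : ℕ) (hp : p ∈ ({47, 59, 67, 71, 73, 79, 83} : Finset ℕ))
    (α : ℝ) (hα : 0 < α) (n : ℕ) (hn : 0 < n) :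
    (Irrational (α ^ 2) →
      ∃ red : EuclideanSpace ℝ (Fin n) → Prop,
        (¬ ∃ (x v : EuclideanSpace ℝ (Fin n)), ‖v‖ = 1 ∧
          ∀ k : ℕ, k < 3 → red (x + (k : ℝ) • v)) ∧
        (¬ ∃ (x v : EuclideanSpace ℝ (Fin n)), ‖v‖ = α ∧
          ∀ k : ℕ, k < p ^ 2 → ¬ red (x + (k : ℝ) • v))) ∧
    (∀ a b : ℕ, 0 < a → 0 < b → Nat.Coprime a b → α ^ 2 = (a : ℝ) / (b : ℝ) →
      (¬ p ∣ b ∨ 4 * p < 3 * a) →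
      ∃ red : EuclideanSpace ℝ (Fin n) → Prop,
        (¬ ∃ (x v : EuclideanSpace ℝ (Fin n)), ‖v‖ = 1 ∧
          ∀ k : ℕ, k < 3 → red (x + (k : ℝ) • v)) ∧
        (¬ ∃ (x v : EuclideanSpace ℝ (Fin n)), ‖v‖ = α ∧
          ∀ k : ℕ, k < p ^ 2 → ¬ red (x + (k : ℝ) • v))) := by
  have hgap := hasShortGaps_of_mem hp
  obtain ⟨hpp, hp38⟩ : p.Prime ∧ 38 ≤ p := by
    simp only [Finset.mem_insert, Finset.mem_singleton] at hp
    rcases hp with rfl | rfl | rfl | rfl | rfl | rfl | rfl <;> norm_num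
  have : Fact p.Prime := ⟨hpp⟩
  constructor
  · intro hirr
    exact exists_coloring hp38 hgap hα n (exists_int_of_irrational hpp hirr)
  · intro a b ha hb hab hαab hcase
    apply exists_coloring hp38 hgap hα n
    rw [hαab]
    by_cases hpb : p ∣ b
    · have hpa : 4 * p < 3 * a := hcase.resolve_left (not_not_intro hpb)
      exact exists_int_of_dvd hpp hb hab hpb (by omega)
    · exact exists_int_of_not_dvd hpp hp38 ha hb hab hpb
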